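/- arXiv:math/0304381 — 2 statements merged into one kernel-verified Lean document; each statement's English description precedes it below -/
import Mathlib

section
/- Let k, μ, s ∈ ℂ with k ≠ 0, s ∉ ℤ, and 2−s not a nonpositive integer. Define y₃(x) = (x(x−1)/k)·((1−s)/x − k/(1−x) + ((k−s+1)(1−μ−s)/(2−s))·F(k−s+2, 2−μ−s, 3−s, x)/F(k−s+1, 1−μ−s, 2−s, x)). Let U ⊆ ℂ be an open subset of the unit disc {|x| < 1} on which x ≠ 0, x ≠ 1, F(k−s+1, 1−μ−s, 2−s, x) ≠ 0, and y₃(x) ∉ {0, 1, x}. Then y₃ solves P_VI(k²/2, −(μ+s)²/2, (k−s+1)²/2, (1−μ²)/2) on U. -/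
/-- `y` solves the Painlevé VI equation with parameters `(α, β, γ, δ)` on `U`:
`y` is twice differentiable on `U`, and at every `x ∈ U` we have `x ≠ 0`, `x ≠ 1`,
`y x ∉ {0, 1, x}` and the Painlevé VI equation holds. -/
def SolvesPVI (α β γ δ : ℂ) (U : Set ℂ) (y : ℂ → ℂ) : Prop :=
  (∀ x ∈ U, DifferentiableAt ℂ y x) ∧
  (∀ x ∈ U, DifferentiableAt ℂ (deriv y) x) ∧
  ∀ x ∈ U, x ≠ 0 ∧ x ≠ 1 ∧ y x ≠ 0 ∧ y x ≠ 1 ∧ y x ≠ x ∧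
    deriv (deriv y) x =
      (1 / 2) * (1 / y x + 1 / (y x - 1) + 1 / (y x - x)) * (deriv y x) ^ 2
        - (1 / x + 1 / (x - 1) + 1 / (y x - x)) * deriv y x
        + (y x * (y x - 1) * (y x - x) / (x ^ 2 * (x - 1) ^ 2)) *
            (α + β * x / (y x) ^ 2 + γ * (x - 1) / (y x - 1) ^ 2
              + δ * x * (x - 1) / (y x - x) ^ 2)

/-- The Gauss hypergeometric series `F(a, b, c, x) = Σ (a)ₙ(b)ₙ/(c)ₙ · xⁿ/n!`,
where `(a)ₙ` is the ascending Pochhammer symbol. -/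
noncomputable def hypF (a b c x : ℂ) : ℂ :=
  ∑' n : ℕ,
    ((ascPochhammer ℂ n).eval a * (ascPochhammer ℂ n).eval b / (ascPochhammer ℂ n).eval c)
      * x ^ n / (n.factorial : ℂ)

/-- The solution `y₃(k, μ, s)`, built from the second solution of the
hypergeometric equation. -/
noncomputable def y3 (k μ s : ℂ) : ℂ → ℂ := fun x =>
  (x * (x - 1) / k) *
    ((1 - s) / x - k / (1 - x)
      + ((k - s + 1) * (1 - μ - s) / (2 - s))
          * hypF (k - s + 2) (2 - μ - s) (3 - s) x
          / hypF (k - s + 1) (1 - μ - s) (2 - s) x)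

/-!
If `f` solves Gauss's equation with parameters `(a, b, c)`, then the logarithmic derivative of
`u = x ^ (c - 1) * (1 - x) ^ (a - c + 1) * f`, multiplied by `x * (x - 1) / (a - c + 1)`, solves
the Riccati equation
`x (x - 1) y' = -(θ₀ (y - 1) (y - x) + θ₁ y (y - x) + (θₓ - 1) y (y - 1))`
with `θ₀ = 1 - b`, `θ₁ = a`, `θₓ = b - c + 1`. Differentiating this equation once shows that each
of its solutions solves Painlevé VI with parameters
`((θ₀ + θ₁ + θₓ - 1)² / 2, -θ₀² / 2, θ₁² / 2, (1 - θₓ²) / 2)`. The function `y₃` arises in this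
way from `f = F(k - s + 1, 1 - μ - s, 2 - s, x)`.
-/

open FormalMultilinearSeries

section PowerSeries

lemma hasSum_mul_pow_of_succ {R : Type*} [CommRing R] [TopologicalSpace R] [IsTopologicalRing R]
    {u : ℕ → R} {x S : R} (hu : u 0 = 0) (h : HasSum (fun n ↦ u (n + 1) * x ^ n) S) :
    HasSum (fun n ↦ u n * x ^ n) (x * S) := by
  rw [← hasSum_nat_add_iff' 1]
  simpa [hu, pow_succ', mul_left_comm] using h.mul_left x

variable {𝕜 : Type*} [NontriviallyNormedField 𝕜] {f : 𝕜 → 𝕜} {u : ℕ → 𝕜} {r : ENNReal}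

lemma hasSum_mul_pow_of_hasFPowerSeriesOnBall (hf : HasFPowerSeriesOnBall f (ofScalars 𝕜 u) 0 r)
    {x : 𝕜} (hx : x ∈ Metric.eball 0 r) : HasSum (fun n ↦ u n * x ^ n) (f x) := by
  simpa [ofScalars_apply_eq, mul_comm] using hf.hasSum hx

lemma hasFPowerSeriesOnBall_deriv_ofScalars [CompleteSpace 𝕜]
    (hf : HasFPowerSeriesOnBall f (ofScalars 𝕜 u) 0 r) :
    HasFPowerSeriesOnBall (deriv f) (ofScalars 𝕜 fun n ↦ (n + 1) * u (n + 1)) 0 r := by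
  convert! (ContinuousLinearMap.apply 𝕜 𝕜 (1 : 𝕜)).comp_hasFPowerSeriesOnBall hf.fderiv using 1
  refine FormalMultilinearSeries.ext fun n ↦ ContinuousMultilinearMap.ext_ring ?_
  simp

end PowerSeries

section HypergeometricCoefficients

lemma ascPochhammer_succ_eval_left {S : Type*} [CommSemiring S] (n : ℕ) (a : S) :
    (ascPochhammer S (n + 1)).eval a = a * (ascPochhammer S n).eval (a + 1) := by
  simp [ascPochhammer_succ_left]

variable {𝕂 : Type*} [Field 𝕂] [CharZero 𝕂]

lemma ordinaryHypergeometricCoefficient_succ (a b : 𝕂) {c : 𝕂} {n : ℕ} (hc : c + n ≠ 0) :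
    (c + n) * ((n + 1) * ordinaryHypergeometricCoefficient a b c (n + 1)) =
      (a + n) * (b + n) * ordinaryHypergeometricCoefficient a b c n := by
  have hn : (n : 𝕂) + 1 ≠ 0 := n.cast_add_one_ne_zero
  simp only [ordinaryHypergeometricCoefficient, ascPochhammer_succ_eval, Nat.factorial_succ,
    Nat.cast_mul, Nat.cast_add_one]
  field_simp

lemma succ_mul_ordinaryHypergeometricCoefficient_succ (a b c : 𝕂) (n : ℕ) :
    (n + 1) * ordinaryHypergeometricCoefficient a b c (n + 1) =
      a * b / c * ordinaryHypergeometricCoefficient (a + 1) (b + 1) (c + 1) n := by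
  have hn : (n : 𝕂) + 1 ≠ 0 := n.cast_add_one_ne_zero
  simp only [ordinaryHypergeometricCoefficient, ascPochhammer_succ_eval_left, Nat.factorial_succ,
    Nat.cast_mul, Nat.cast_add_one]
  field_simp

end HypergeometricCoefficients

section HypergeometricFunction

/-- `f` is a twice differentiable solution of Gauss's hypergeometric differential equation with
parameters `(a, b, c)` at every point of `U`. -/
structure SolvesHypergeometric {𝕜 : Type*} [NontriviallyNormedField 𝕜] (a b c : 𝕜) (U : Set 𝕜)
    (f : 𝕜 → 𝕜) : Prop where
  differentiableAt : ∀ x ∈ U, DifferentiableAt 𝕜 f x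
  differentiableAt_deriv : ∀ x ∈ U, DifferentiableAt 𝕜 (deriv f) x
  equation : ∀ x ∈ U,
    x * (1 - x) * deriv (deriv f) x + (c - (a + b + 1) * x) * deriv f x = a * b * f x

lemma SolvesHypergeometric.mono {𝕜 : Type*} [NontriviallyNormedField 𝕜] {a b c : 𝕜} {U V : Set 𝕜}
    {f : 𝕜 → 𝕜} (hf : SolvesHypergeometric a b c V f) (hUV : U ⊆ V) :
    SolvesHypergeometric a b c U f where
  differentiableAt x hx := hf.differentiableAt x (hUV hx)
  differentiableAt_deriv x hx := hf.differentiableAt_deriv x (hUV hx)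
  equation x hx := hf.equation x (hUV hx)

variable {𝕂 : Type*} [RCLike 𝕂]

lemma one_le_radius_ordinaryHypergeometricSeries (a b c : 𝕂) :
    1 ≤ (ordinaryHypergeometricSeries 𝕂 a b c).radius := by
  by_cases! h : ∀ n : ℕ, (n : 𝕂) ≠ -a ∧ (n : 𝕂) ≠ -b ∧ (n : 𝕂) ≠ -c
  · exact (ordinaryHypergeometricSeries_radius_eq_one 𝕂 a b c h).ge
  · obtain ⟨n, hn⟩ := h
    obtain rfl | rfl | rfl : a = -n ∨ b = -n ∨ c = -n := by grind [neg_eq_iff_eq_neg]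
    · simp [ordinaryHypergeometric_radius_top_of_neg_nat₁]
    · simp [ordinaryHypergeometric_radius_top_of_neg_nat₂]
    · simp [ordinaryHypergeometric_radius_top_of_neg_nat₃]

lemma hasFPowerSeriesOnBall_ordinaryHypergeometric (a b c : 𝕂) :
    HasFPowerSeriesOnBall (₂F₁ a b c) (ordinaryHypergeometricSeries 𝕂 a b c) 0 1 := by
  have h := one_le_radius_ordinaryHypergeometricSeries a b c
  exact (FormalMultilinearSeries.hasFPowerSeriesOnBall _ (one_pos.trans_le h)).mono one_pos h

lemma deriv_ordinaryHypergeometric (a b c : 𝕂) {x : 𝕂} (hx : x ∈ Metric.ball 0 1) :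
    deriv (₂F₁ a b c) x = a * b / c * ₂F₁ (a + 1) (b + 1) (c + 1) x := by
  replace hx : x ∈ Metric.eball 0 1 := by simpa [← Metric.eball_ofReal] using hx
  refine (hasSum_mul_pow_of_hasFPowerSeriesOnBall (hasFPowerSeriesOnBall_deriv_ofScalars
    (hasFPowerSeriesOnBall_ordinaryHypergeometric a b c)) hx).unique ?_
  simp_rw [succ_mul_ordinaryHypergeometricCoefficient_succ, mul_assoc (a * b / c)]
  exact (hasSum_mul_pow_of_hasFPowerSeriesOnBall
    (hasFPowerSeriesOnBall_ordinaryHypergeometric _ _ _) hx).mul_left _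

lemma solvesHypergeometric_ordinaryHypergeometric (a b : 𝕂) {c : 𝕂} (hc : ∀ n : ℕ, c ≠ -n) :
    SolvesHypergeometric a b c (Metric.ball 0 1) (₂F₁ a b c) := by
  have hball : Metric.eball (0 : 𝕂) 1 = Metric.ball 0 1 := by simp [← Metric.eball_ofReal]
  have hf := hasFPowerSeriesOnBall_ordinaryHypergeometric a b c
  have hf' := hasFPowerSeriesOnBall_deriv_ofScalars hf
  have hf'' := hasFPowerSeriesOnBall_deriv_ofScalars hf'
  rw [← hball]
  refine ⟨fun x hx ↦ (hf.analyticAt_of_mem hx).differentiableAt,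
    fun x hx ↦ (hf'.analyticAt_of_mem hx).differentiableAt, fun x hx ↦ ?_⟩
  have sum_f := hasSum_mul_pow_of_hasFPowerSeriesOnBall hf hx
  have sum_f' := hasSum_mul_pow_of_hasFPowerSeriesOnBall hf' hx
  set C := ordinaryHypergeometricCoefficient a b c
  have sum_xf' : HasSum (fun n ↦ n * C n * x ^ n) (x * deriv (₂F₁ a b c) x) :=
    hasSum_mul_pow_of_succ (by simp) (by simpa using sum_f')
  have sum_xf'' : HasSum (fun n ↦ n * ((n + 1) * C (n + 1)) * x ^ n)
      (x * deriv (deriv (₂F₁ a b c)) x) :=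
    hasSum_mul_pow_of_succ (by simp)
      (by simpa using hasSum_mul_pow_of_hasFPowerSeriesOnBall hf'' hx)
  have sum_xxf'' : HasSum (fun n ↦ (n - 1) * (n * C n) * x ^ n)
      (x * (x * deriv (deriv (₂F₁ a b c)) x)) :=
    hasSum_mul_pow_of_succ (by simp) (by simpa using sum_xf'')
  have sum_lhs := (sum_xf''.sub sum_xxf'').add
    ((sum_f'.mul_left c).sub (sum_xf'.mul_left (a + b + 1)))
  have hsum := sum_lhs.unique ((sum_f.mul_left (a * b)).congr_fun fun n ↦ ?_)
  · linear_combination hsum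
  · have hcn : c + n ≠ 0 := fun h ↦ hc n (eq_neg_of_add_eq_zero_left h)
    linear_combination x ^ n * ordinaryHypergeometricCoefficient_succ a b hcn

end HypergeometricFunction

section Riccati

variable {𝕜 : Type*} [NontriviallyNormedField 𝕜]

lemma hasDerivAt_logDeriv {𝕜' : Type*} [NontriviallyNormedField 𝕜'] [NormedAlgebra 𝕜 𝕜']
    {f : 𝕜 → 𝕜'} {x : 𝕜} (hf : DifferentiableAt 𝕜 f x) (hf' : DifferentiableAt 𝕜 (deriv f) x)
    (hx : f x ≠ 0) :
    HasDerivAt (logDeriv f) (deriv (deriv f) x / f x - logDeriv f x ^ 2) x := by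
  convert! hf'.hasDerivAt.div hf.hasDerivAt hx using 1
  rw [logDeriv_apply]
  field_simp

/-- The right-hand side of the Riccati equation `y' = riccatiField θ₀ θ₁ θₓ x y` whose solutions
solve Painlevé VI. The parameters are normalized so that `β = -θ₀² / 2`, `γ = θ₁² / 2` and
`δ = (1 - θₓ²) / 2` there. -/
def riccatiField (θ₀ θ₁ θₓ x y : 𝕜) : 𝕜 :=
  -(θ₀ * (y - 1) * (y - x) + θ₁ * y * (y - x) + (θₓ - 1) * y * (y - 1)) / (x * (x - 1))

/-- `y` solves the Riccati equation with right-hand side `riccatiField θ₀ θ₁ θₓ` on `U`. -/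
def SolvesRiccati (θ₀ θ₁ θₓ : 𝕜) (U : Set 𝕜) (y : 𝕜 → 𝕜) : Prop :=
  ∀ x ∈ U, HasDerivAt y (riccatiField θ₀ θ₁ θₓ x (y x)) x

/-- The function `x (x - 1) / (a - c + 1) * u' / u`, where
`u = x ^ (c - 1) * (1 - x) ^ (a - c + 1) * f`, which turns solutions `f` of Gauss's equation into
solutions of the Riccati equation. The logarithmic derivative of `u` is written out, so that no
branch of the complex powers has to be chosen. -/
noncomputable def riccatiOfHypergeometric (a c : 𝕜) (f : 𝕜 → 𝕜) (x : 𝕜) : 𝕜 :=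
  x * (x - 1) / (a - c + 1) * ((c - 1) / x - (a - c + 1) / (1 - x) + logDeriv f x)

lemma SolvesHypergeometric.solvesRiccati {a b c : 𝕜} {U : Set 𝕜} {f : 𝕜 → 𝕜}
    (hf : SolvesHypergeometric a b c U f) (hac : a - c + 1 ≠ 0)
    (hU : ∀ x ∈ U, x ≠ 0 ∧ x ≠ 1 ∧ f x ≠ 0) :
    SolvesRiccati (1 - b) a (b - c + 1) U (riccatiOfHypergeometric a c f) := by
  intro x hx
  obtain ⟨hx0, hx1, hfx⟩ := hU x hx
  have hx1' : 1 - x ≠ 0 := sub_ne_zero.2 hx1.symm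
  have hx1'' : x - 1 ≠ 0 := sub_ne_zero.2 hx1
  have hf'' : deriv (deriv f) x / f x =
      (a * b - (c - (a + b + 1) * x) * logDeriv f x) / (x * (1 - x)) := by
    rw [logDeriv_apply]
    field_simp
    linear_combination hf.equation x hx
  have hid := hasDerivAt_id' x
  convert! ((hid.mul (hid.sub_const 1)).div_const (a - c + 1)).mul
    ((((hasDerivAt_const x (c - 1)).div hid hx0).sub
      ((hasDerivAt_const x (a - c + 1)).div (hid.const_sub 1) hx1')).add
      (hasDerivAt_logDeriv (hf.differentiableAt x hx) (hf.differentiableAt_deriv x hx) hfx)) using 1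
  simp only [riccatiField, riccatiOfHypergeometric, hf'', Pi.mul_apply, Pi.div_apply,
    Pi.add_apply, Pi.sub_apply]
  generalize logDeriv f x = w
  rw [← neg_sub x 1]
  field_simp
  ring

namespace SolvesRiccati

lemma congr {θ₀ θ₁ θₓ : 𝕜} {U : Set 𝕜} {y z : 𝕜 → 𝕜} (hy : SolvesRiccati θ₀ θ₁ θₓ U y)
    (hU : IsOpen U) (h : Set.EqOn z y U) : SolvesRiccati θ₀ θ₁ θₓ U z := fun x hx ↦ by
  rw [h hx]
  exact (hy x hx).congr_of_eventuallyEq (h.eventuallyEq_of_mem (hU.mem_nhds hx))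

lemma hasDerivAt_deriv {θ₀ θ₁ θₓ : 𝕜} {U : Set 𝕜} {y : 𝕜 → 𝕜} (hy : SolvesRiccati θ₀ θ₁ θₓ U y)
    (hU : IsOpen U) {x : 𝕜} (hx : x ∈ U) (hx0 : x ≠ 0) (hx1 : x ≠ 1) :
    HasDerivAt (deriv y)
      (-(θ₀ * (deriv y x * (y x - x) + (y x - 1) * (deriv y x - 1))
        + θ₁ * (deriv y x * (y x - x) + y x * (deriv y x - 1))
        + (θₓ - 1) * (deriv y x * (y x - 1) + y x * deriv y x)
        + (2 * x - 1) * deriv y x) / (x * (x - 1))) x := by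
  have hx1' : x - 1 ≠ 0 := sub_ne_zero.2 hx1
  have hid := hasDerivAt_id' x
  have hyx := hy x hx
  have hy0 := hyx.sub_const 1
  have hyid := hyx.sub hid
  have hfield := (((((hy0.const_mul θ₀).mul hyid).add ((hyx.const_mul θ₁).mul hyid)).add
    ((hyx.const_mul (θₓ - 1)).mul hy0)).neg).div (hid.mul (hid.sub_const 1)) (mul_ne_zero hx0 hx1')
  have hderiv : deriv y =ᶠ[nhds x] fun t ↦ riccatiField θ₀ θ₁ θₓ t (y t) := by
    filter_upwards [hU.mem_nhds hx] with t ht using (hy t ht).deriv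
  convert! hfield.congr_of_eventuallyEq hderiv using 1
  rw [hyx.deriv]
  simp only [riccatiField, Pi.mul_apply, Pi.add_apply, Pi.sub_apply, Pi.neg_apply]
  field_simp
  ring

lemma solvesPVI {θ₀ θ₁ θₓ : ℂ} {U : Set ℂ} {y : ℂ → ℂ} (hy : SolvesRiccati θ₀ θ₁ θₓ U y)
    (hU : IsOpen U) (hreg : ∀ x ∈ U, x ≠ 0 ∧ x ≠ 1 ∧ y x ≠ 0 ∧ y x ≠ 1 ∧ y x ≠ x) :
    SolvesPVI ((θ₀ + θ₁ + θₓ - 1) ^ 2 / 2) (-θ₀ ^ 2 / 2) (θ₁ ^ 2 / 2) ((1 - θₓ ^ 2) / 2) U y := by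
  refine ⟨fun x hx ↦ (hy x hx).differentiableAt, fun x hx ↦ ?_, fun x hx ↦ ?_⟩
  all_goals obtain ⟨hx0, hx1, hy0, hy1, hyx⟩ := hreg x hx
  · exact (hy.hasDerivAt_deriv hU hx hx0 hx1).differentiableAt
  · refine ⟨hx0, hx1, hy0, hy1, hyx, ?_⟩
    rw [(hy.hasDerivAt_deriv hU hx hx0 hx1).deriv, (hy x hx).deriv, riccatiField]
    have hx1' : x - 1 ≠ 0 := sub_ne_zero.2 hx1
    have hy1' : y x - 1 ≠ 0 := sub_ne_zero.2 hy1
    have hyx' : y x - x ≠ 0 := sub_ne_zero.2 hyx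
    field_simp
    ring

end SolvesRiccati

end Riccati

lemma hypF_eq_ordinaryHypergeometric (a b c : ℂ) : hypF a b c = ₂F₁ a b c := by
  funext x
  rw [hypF, ordinaryHypergeometric_eq_tsum]
  refine tsum_congr fun n ↦ ?_
  rw [smul_eq_mul]
  ring

lemma y3_eqOn_riccatiOfHypergeometric (k μ s : ℂ) :
    Set.EqOn (y3 k μ s)
      (riccatiOfHypergeometric (k - s + 1) (2 - s) (hypF (k - s + 1) (1 - μ - s) (2 - s)))
      (Metric.ball 0 1) := by
  intro x hx
  rw [y3, riccatiOfHypergeometric, logDeriv_apply, hypF_eq_ordinaryHypergeometric,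
    hypF_eq_ordinaryHypergeometric, deriv_ordinaryHypergeometric _ _ _ hx]
  ring_nf

lemma y3_solvesRiccati (k μ s : ℂ) (hk : k ≠ 0) (h2s : ∀ m : ℕ, 2 - s ≠ -(m : ℂ))
    (U : Set ℂ) (hU : IsOpen U) (hUball : U ⊆ Metric.ball (0 : ℂ) 1)
    (hreg : ∀ x ∈ U, x ≠ 0 ∧ x ≠ 1 ∧ hypF (k - s + 1) (1 - μ - s) (2 - s) x ≠ 0) :
    SolvesRiccati (μ + s) (k - s + 1) (-μ) U (y3 k μ s) := by
  have hF : SolvesHypergeometric (k - s + 1) (1 - μ - s) (2 - s) U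
      (hypF (k - s + 1) (1 - μ - s) (2 - s)) := by
    rw [hypF_eq_ordinaryHypergeometric]
    exact (solvesHypergeometric_ordinaryHypergeometric _ _ h2s).mono hUball
  have hac : k - s + 1 - (2 - s) + 1 ≠ 0 := by ring_nf; exact hk
  convert (hF.solvesRiccati hac hreg).congr hU
    ((y3_eqOn_riccatiOfHypergeometric k μ s).mono hUball) using 1 <;> ring

theorem y3_solves_painleveVI_general (k μ s : ℂ) (hk : k ≠ 0) (h2s : ∀ m : ℕ, 2 - s ≠ -(m : ℂ))
    (U : Set ℂ) (hU : IsOpen U) (hUball : U ⊆ Metric.ball (0 : ℂ) 1)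
    (hreg : ∀ x ∈ U, x ≠ 0 ∧ x ≠ 1 ∧ hypF (k - s + 1) (1 - μ - s) (2 - s) x ≠ 0 ∧
      y3 k μ s x ≠ 0 ∧ y3 k μ s x ≠ 1 ∧ y3 k μ s x ≠ x) :
    SolvesPVI (k ^ 2 / 2) (-(μ + s) ^ 2 / 2) ((k - s + 1) ^ 2 / 2)
      ((1 - μ ^ 2) / 2) U (y3 k μ s) := by
  have hR : SolvesRiccati (μ + s) (k - s + 1) (-μ) U (y3 k μ s) :=
    y3_solvesRiccati k μ s hk h2s U hU hUball fun x hx ↦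
      have ⟨hx0, hx1, hF, _⟩ := hreg x hx
      ⟨hx0, hx1, hF⟩
  have hPVI := hR.solvesPVI hU fun x hx ↦
    have ⟨hx0, hx1, _, hy⟩ := hreg x hx
    ⟨hx0, hx1, hy⟩
  convert hPVI using 1 <;> ring

/-- **Case 1** `a = -k` for the second hypergeometric solution: `y₃` solves
`P_VI(k²/2, -(μ+s)²/2, (k-s+1)²/2, (1-μ²)/2)`. -/
theorem y3_solves_painleveVI (k μ s : ℂ) (hk : k ≠ 0)
    (hsZ : ∀ m : ℤ, s ≠ (m : ℂ)) (h2s : ∀ m : ℕ, 2 - s ≠ -(m : ℂ))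
    (U : Set ℂ) (hU : IsOpen U) (hUball : U ⊆ Metric.ball (0 : ℂ) 1)
    (hreg : ∀ x ∈ U, x ≠ 0 ∧ x ≠ 1 ∧ hypF (k - s + 1) (1 - μ - s) (2 - s) x ≠ 0 ∧
      y3 k μ s x ≠ 0 ∧ y3 k μ s x ≠ 1 ∧ y3 k μ s x ≠ x) :
    SolvesPVI (k ^ 2 / 2) (-(μ + s) ^ 2 / 2) ((k - s + 1) ^ 2 / 2)
      ((1 - μ ^ 2) / 2) U (y3 k μ s) :=
  y3_solves_painleveVI_general k μ s hk h2s U hU hUball hreg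
end

section
/- The rational function y(x) = (3−√2)·x·(7x² − 16x + 4√2·x + 12 − 6√2) / (7x² + 6√2·x − 18x + 24 − 15√2) solves P_VI((2+√2)²/2, −8, (1+√2)²/2, −3/2) on any open set U ⊆ ℂ on which x ≠ 0, x ≠ 1, 7x² + 6√2·x − 18x + 24 − 15√2 ≠ 0, and y(x) ∉ {0, 1, x}. -/
/-- The rational (over `ℚ(√2)`) function of the Remark, where `√2` is the positive
square root of `2`. -/
noncomputable def yRemark : ℂ → ℂ := fun x =>
  (3 - (Real.sqrt 2 : ℂ)) * x *
      (7 * x ^ 2 - 16 * x + 4 * (Real.sqrt 2 : ℂ) * x + 12 - 6 * (Real.sqrt 2 : ℂ))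
    / (7 * x ^ 2 + 6 * (Real.sqrt 2 : ℂ) * x - 18 * x + 24 - 15 * (Real.sqrt 2 : ℂ))

/-!
The Painlevé VI equation has a classical family of Riccati solutions: every `y` with
`x (x - 1) y' = κ₀ (y - 1) (y - x) + κ₁ y (y - x) + κₓ y (y - 1)` solves `P_VI` with
`α = (κ₀ + κ₁ + κₓ)² / 2`, `β = -κ₀² / 2`, `γ = κ₁² / 2` and `δ = (1 - (κₓ - 1)²) / 2`.
For `(κ₀, κ₁, κₓ) = (-4, 1 - a, 3)` the Riccati equation has a rational solution for every `a`,
a quotient of the hypergeometric polynomials `x · ₂F₁(-2, a + 1; 3; x)` and `₂F₁(-2, a; 2; x)`.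
The function of the Remark is the member `a = 2 + √2` of this family.
-/

/-- The value that Painlevé VI prescribes for `y''` in terms of `x`, `y` and `y'`, written as in
`SolvesPVI`. -/
noncomputable def painleveVIRHS (α β γ δ x y y' : ℂ) : ℂ :=
  (1 / 2) * (1 / y + 1 / (y - 1) + 1 / (y - x)) * y' ^ 2
    - (1 / x + 1 / (x - 1) + 1 / (y - x)) * y'
    + (y * (y - 1) * (y - x) / (x ^ 2 * (x - 1) ^ 2)) *
        (α + β * x / y ^ 2 + γ * (x - 1) / (y - 1) ^ 2 + δ * x * (x - 1) / (y - x) ^ 2)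

/-- The right-hand side, as a function of `x` and the value `y`, of the Riccati equation whose
solutions are the classical Riccati solutions of Painlevé VI. -/
noncomputable def riccatiPVI (κ₀ κ₁ κₓ x y : ℂ) : ℂ :=
  (κ₀ * (y - 1) * (y - x) + κ₁ * y * (y - x) + κₓ * y * (y - 1)) / (x * (x - 1))

theorem hasDerivAt_riccatiPVI_comp {κ₀ κ₁ κₓ x y' : ℂ} {y : ℂ → ℂ} (hy : HasDerivAt y y' x)
    (hx₀ : x ≠ 0) (hx₁ : x ≠ 1) :
    HasDerivAt (fun t => riccatiPVI κ₀ κ₁ κₓ t (y t))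
      (((κ₀ * (2 * y x - 1 - x) + κ₁ * (2 * y x - x) + κₓ * (2 * y x - 1)) * y'
          - κ₀ * (y x - 1) - κ₁ * y x) / (x * (x - 1))
        - (2 * x - 1) / (x * (x - 1)) * riccatiPVI κ₀ κ₁ κₓ x (y x)) x := by
  have hx₁' : x - 1 ≠ 0 := sub_ne_zero.2 hx₁
  have hid := hasDerivAt_id' x
  have hnum := (((hy.sub_const 1).const_mul κ₀).fun_mul (hy.fun_sub hid)).fun_add
    ((hy.const_mul κ₁).fun_mul (hy.fun_sub hid)) |>.fun_add
    ((hy.const_mul κₓ).fun_mul (hy.sub_const 1))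
  have hden := hid.fun_mul (hid.sub_const 1)
  refine (hnum.fun_div hden (mul_ne_zero hx₀ hx₁')).congr_deriv ?_
  unfold riccatiPVI
  field_simp
  ring

theorem hasDerivAt_riccatiPVI_comp_of_riccati {κ₀ κ₁ κₓ x : ℂ} {y : ℂ → ℂ}
    (hy : HasDerivAt y (riccatiPVI κ₀ κ₁ κₓ x (y x)) x)
    (hx₀ : x ≠ 0) (hx₁ : x ≠ 1) (hy₀ : y x ≠ 0) (hy₁ : y x ≠ 1) (hyx : y x ≠ x) :
    HasDerivAt (fun t => riccatiPVI κ₀ κ₁ κₓ t (y t))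
      (painleveVIRHS ((κ₀ + κ₁ + κₓ) ^ 2 / 2) (-κ₀ ^ 2 / 2) (κ₁ ^ 2 / 2)
        ((1 - (κₓ - 1) ^ 2) / 2) x (y x) (riccatiPVI κ₀ κ₁ κₓ x (y x))) x := by
  refine (hasDerivAt_riccatiPVI_comp hy hx₀ hx₁).congr_deriv ?_
  have hx₁' : x - 1 ≠ 0 := sub_ne_zero.2 hx₁
  have hy₁' : y x - 1 ≠ 0 := sub_ne_zero.2 hy₁
  have hyx' : y x - x ≠ 0 := sub_ne_zero.2 hyx
  unfold painleveVIRHS riccatiPVI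
  field_simp
  ring

theorem SolvesPVI.of_riccati {κ₀ κ₁ κₓ : ℂ} {U : Set ℂ} {y : ℂ → ℂ} (hU : IsOpen U)
    (hreg : ∀ x ∈ U, x ≠ 0 ∧ x ≠ 1 ∧ y x ≠ 0 ∧ y x ≠ 1 ∧ y x ≠ x)
    (hy : ∀ x ∈ U, HasDerivAt y (riccatiPVI κ₀ κ₁ κₓ x (y x)) x) :
    SolvesPVI ((κ₀ + κ₁ + κₓ) ^ 2 / 2) (-κ₀ ^ 2 / 2) (κ₁ ^ 2 / 2) ((1 - (κₓ - 1) ^ 2) / 2)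
      U y := by
  have hderiv : Set.EqOn (deriv y) (fun x => riccatiPVI κ₀ κ₁ κₓ x (y x)) U :=
    fun x hx => (hy x hx).deriv
  have hderiv₂ (x : ℂ) (hx : x ∈ U) : HasDerivAt (deriv y)
      (painleveVIRHS ((κ₀ + κ₁ + κₓ) ^ 2 / 2) (-κ₀ ^ 2 / 2) (κ₁ ^ 2 / 2)
        ((1 - (κₓ - 1) ^ 2) / 2) x (y x) (deriv y x)) x := by
    obtain ⟨hx₀, hx₁, hy₀, hy₁, hyx⟩ := hreg x hx
    rw [hderiv hx]
    have hfield := hasDerivAt_riccatiPVI_comp_of_riccati (hy x hx) hx₀ hx₁ hy₀ hy₁ hyx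
    exact hfield.congr_of_eventuallyEq (hderiv.eventuallyEq_of_mem (hU.mem_nhds hx))
  refine ⟨fun x hx => (hy x hx).differentiableAt, fun x hx => (hderiv₂ x hx).differentiableAt,
    fun x hx => ?_⟩
  obtain ⟨hx₀, hx₁, hy₀, hy₁, hyx⟩ := hreg x hx
  exact ⟨hx₀, hx₁, hy₀, hy₁, hyx, (hderiv₂ x hx).deriv⟩

/-- The denominator `6 · ₂F₁(-2, a; 2; x)` of `rationalPVI`, kept polynomial in `a`. -/
def rationalPVIDenom (a x : ℂ) : ℂ := a * (a + 1) * x ^ 2 - 6 * a * x + 6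

/-- The numerator `12 x · ₂F₁(-2, a + 1; 3; x)` of `rationalPVI`. -/
def rationalPVINum (a x : ℂ) : ℂ := x * ((a + 1) * (a + 2) * x ^ 2 - 8 * (a + 1) * x + 12)

/-- The one-parameter family of rational solutions of Painlevé VI that contains `yRemark`. -/
noncomputable def rationalPVI (a x : ℂ) : ℂ := rationalPVINum a x / rationalPVIDenom a x

theorem hasDerivAt_quadratic {𝕜 : Type*} [NontriviallyNormedField 𝕜] (p q r x : 𝕜) :
    HasDerivAt (fun t => p * t ^ 2 - q * t + r) (2 * p * x - q) x := by
  have hid := hasDerivAt_id' x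
  refine ((((hid.fun_pow 2).const_mul p).fun_sub (hid.const_mul q)).add_const r).congr_deriv ?_
  norm_num
  ring

theorem hasDerivAt_rationalPVI {a x : ℂ} (hx₀ : x ≠ 0) (hx₁ : x ≠ 1)
    (hD : rationalPVIDenom a x ≠ 0) :
    HasDerivAt (rationalPVI a) (riccatiPVI (-4) (1 - a) 3 x (rationalPVI a x)) x := by
  have hx₁' : x - 1 ≠ 0 := sub_ne_zero.2 hx₁
  have hnum : HasDerivAt (rationalPVINum a) _ x :=
    (hasDerivAt_id' x).fun_mul (hasDerivAt_quadratic _ _ _ x)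
  have hden : HasDerivAt (rationalPVIDenom a) _ x := hasDerivAt_quadratic _ _ _ x
  refine (hnum.fun_div hden hD).congr_deriv ?_
  unfold riccatiPVI rationalPVI
  field_simp
  unfold rationalPVINum rationalPVIDenom
  ring

theorem yRemark_solves_painleveVI_general (a : ℂ) {U : Set ℂ} (hU : IsOpen U)
    (hreg : ∀ x ∈ U, x ≠ 0 ∧ x ≠ 1 ∧ rationalPVIDenom a x ≠ 0 ∧
      rationalPVI a x ≠ 0 ∧ rationalPVI a x ≠ 1 ∧ rationalPVI a x ≠ x) :
    SolvesPVI (a ^ 2 / 2) (-8) ((a - 1) ^ 2 / 2) (-3 / 2) U (rationalPVI a) := by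
  have hpvi : SolvesPVI ((-4 + (1 - a) + 3) ^ 2 / 2) (-(-4) ^ 2 / 2) ((1 - a) ^ 2 / 2)
      ((1 - (3 - 1) ^ 2) / 2) U (rationalPVI a) := by
    refine .of_riccati hU (fun x hx => ?_) fun x hx => ?_
    all_goals obtain ⟨hx₀, hx₁, hD, hy⟩ := hreg x hx
    · exact ⟨hx₀, hx₁, hy⟩
    · exact hasDerivAt_rationalPVI hx₀ hx₁ hD
  convert hpvi using 1 <;> ring

theorem ofReal_sqrt_two_sq : (Real.sqrt 2 : ℂ) ^ 2 = 2 := by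
  exact_mod_cast Real.sq_sqrt zero_le_two

-- The factor `(8 - 5√2) / 2` is `7 / (a (a + 1))` at `a = 2 + √2`, the ratio of the leading
-- coefficients of the two denominators.
theorem yRemark_num_eq (x : ℂ) :
    (3 - (Real.sqrt 2 : ℂ)) * x *
        (7 * x ^ 2 - 16 * x + 4 * (Real.sqrt 2 : ℂ) * x + 12 - 6 * (Real.sqrt 2 : ℂ)) =
      (8 - 5 * (Real.sqrt 2 : ℂ)) / 2 * rationalPVINum (2 + (Real.sqrt 2 : ℂ)) x := by
  unfold rationalPVINum
  grind [ofReal_sqrt_two_sq]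

theorem yRemark_denom_eq (x : ℂ) :
    7 * x ^ 2 + 6 * (Real.sqrt 2 : ℂ) * x - 18 * x + 24 - 15 * (Real.sqrt 2 : ℂ) =
      (8 - 5 * (Real.sqrt 2 : ℂ)) / 2 * rationalPVIDenom (2 + (Real.sqrt 2 : ℂ)) x := by
  unfold rationalPVIDenom
  grind [ofReal_sqrt_two_sq]

theorem yRemark_eq_rationalPVI : yRemark = rationalPVI (2 + (Real.sqrt 2 : ℂ)) := by
  ext x
  have hne : (8 - 5 * (Real.sqrt 2 : ℂ)) / 2 ≠ 0 := by
    intro h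
    have hnorm : (8 - 5 * (Real.sqrt 2 : ℂ)) * (8 + 5 * (Real.sqrt 2 : ℂ)) = 14 := by
      linear_combination -25 * ofReal_sqrt_two_sq
    simp_all
  rw [yRemark, yRemark_num_eq, yRemark_denom_eq, mul_div_mul_left _ _ hne, rationalPVI]

/-- **Remark:** `y₂(4, √2, 2) = y₁(2+√2, 2, 2)` is the rational function above and
solves `P_VI((2+√2)²/2, -8, (1+√2)²/2, -3/2)`. -/
theorem yRemark_solves_painleveVI (U : Set ℂ) (hU : IsOpen U)
    (hreg : ∀ x ∈ U, x ≠ 0 ∧ x ≠ 1 ∧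
      7 * x ^ 2 + 6 * (Real.sqrt 2 : ℂ) * x - 18 * x + 24 - 15 * (Real.sqrt 2 : ℂ) ≠ 0 ∧
      yRemark x ≠ 0 ∧ yRemark x ≠ 1 ∧ yRemark x ≠ x) :
    SolvesPVI ((2 + (Real.sqrt 2 : ℂ)) ^ 2 / 2) (-8)
      ((1 + (Real.sqrt 2 : ℂ)) ^ 2 / 2) (-3 / 2) U yRemark := by
  simp only [yRemark_eq_rationalPVI, yRemark_denom_eq, mul_ne_zero_iff] at hreg ⊢
  convert yRemark_solves_painleveVI_general (2 + (Real.sqrt 2 : ℂ)) hU (by grind) using 1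
  ring
end
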